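/- arXiv:1702.06420 — 3 statements merged into one kernel-verified Lean document; each statement's English description precedes it below -/
import Mathlib

section
/- Let a > 0 be a real number. Define functions G_0, G_1, G_2, … on the interval (−∞, 1/a) by G_0(x) = 1/(1 − ax) and G_{j+1}(x) = ∫_0^x G_j(u) du. Then for every integer p ≥ 1 and every real x with x < 1/a, G_p(x) = ((-1)^p / (a^p (p−1)!)) · [ (1 − ax)^{p−1} ln(1 − ax) − H_{p−1}(1 − ax)^{p−1} + H_{p−1} ] + Σ_{k=1}^{p−2} (-1)^{p−k} H_{p−1−k} x^k / ( a^{p−k} (p−1−k)! k! ), where the last sum is empty for p ≤ 2. -/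
/-- Harmonic numbers. -/
def harmonic' (n : ℕ) : ℚ := ∑ j ∈ Finset.Icc 1 n, (1 : ℚ) / (j : ℚ)

/-!
Up to the factor `(-1) ^ (n + 1) / a ^ (n + 1)`, an `(n + 1)`-st primitive of `1 / (1 - a * x)` is
`y ^ n / n! * (log y - H_n)` at `y = 1 - a * x`. Integrating from `0` subtracts from it its Taylor
polynomial of degree `n` at `0`, whose coefficients are values at `y = 1`. There `log` vanishes and
only harmonic numbers remain.
-/

lemma harmonic'_eq_harmonic : harmonic' = harmonic := by
  funext n
  simp only [harmonic', harmonic_eq_sum_Icc, one_div]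

lemma sum_range_succ_eq_add_sum_Icc_of_last_eq_zero {M : Type*} [AddCommMonoid M]
    {f : ℕ → M} {n : ℕ} (hf : f n = 0) :
    ∑ k ∈ Finset.range (n + 1), f k = f 0 + ∑ k ∈ Finset.Icc 1 (n - 1), f k := by
  rw [Finset.range_eq_Ico, Finset.sum_eq_sum_Ico_succ_bot n.succ_pos]
  congr 1
  symm
  refine Finset.sum_subset (fun k hk => ?_) fun k hk hk' => ?_
  · simp only [Finset.mem_Icc, Finset.mem_Ico] at hk ⊢
    omega
  · have hkn : k = n := by
      simp only [Finset.mem_Icc, Finset.mem_Ico] at hk hk'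
      omega
    rw [hkn, hf]

section TaylorRemainder

open scoped Nat

variable {E : Type*} [NormedAddCommGroup E] [NormedSpace ℝ E]

/-- For a sequence `F` in which each `F (n + 1)` is a primitive of `F n`, this is `F n` minus its
Taylor polynomial of degree `n - 1` at `c`: the derivative of order `k ≤ n` of `F n` is
`F (n - k)`. -/
noncomputable def taylorRemainder (F : ℕ → ℝ → E) (c : ℝ) (n : ℕ) (x : ℝ) : E :=
  F n x - ∑ k ∈ Finset.range n, ((x - c) ^ k / k !) • F (n - k) c

variable {F G : ℕ → ℝ → E} {c : ℝ} {n : ℕ} {x : ℝ}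

lemma taylorRemainder_zero : taylorRemainder F c 0 = F 0 := by
  funext x
  simp [taylorRemainder]

lemma taylorRemainder_succ_self : taylorRemainder F c (n + 1) c = 0 := by
  simp [taylorRemainder, Finset.sum_range_succ']

lemma hasDerivAt_sub_pow_succ_div_factorial (c x : ℝ) (k : ℕ) :
    HasDerivAt (fun y : ℝ => (y - c) ^ (k + 1) / (k + 1)!) ((x - c) ^ k / k !) x := by
  refine ((((hasDerivAt_id x).sub_const c).fun_pow (k + 1)).div_const _).congr_deriv ?_
  rw [Nat.factorial_succ]
  push_cast
  simp only [id]
  field_simp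

lemma hasDerivAt_taylorRemainder_succ (hF : HasDerivAt (F (n + 1)) (F n x) x) :
    HasDerivAt (taylorRemainder F c (n + 1)) (taylorRemainder F c n x) x := by
  have hsum : HasDerivAt
      (fun y => ∑ k ∈ Finset.range n, ((y - c) ^ (k + 1) / (k + 1)!) • F (n - k) c)
      (∑ k ∈ Finset.range n, ((x - c) ^ k / k !) • F (n - k) c) x :=
    HasDerivAt.fun_sum fun k _ =>
      (hasDerivAt_sub_pow_succ_div_factorial c x k).smul_const (F (n - k) c)
  refine (hF.fun_sub (hsum.add_const (F (n + 1) c))).congr_of_eventuallyEq (.of_forall fun y => ?_)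
  simp [taylorRemainder, Finset.sum_range_succ']

theorem eqOn_taylorRemainder_of_iterated_integral [CompleteSpace E] {s : Set ℝ}
    (hs : s.OrdConnected) (hc : c ∈ s) (hF0 : ContinuousOn (F 0) s)
    (hF : ∀ n, ∀ x ∈ s, HasDerivAt (F (n + 1)) (F n x) x) (hG0 : Set.EqOn (G 0) (F 0) s)
    (hG : ∀ n, ∀ x ∈ s, G (n + 1) x = ∫ u in c..x, G n u) (n : ℕ) :
    Set.EqOn (G n) (taylorRemainder F c n) s := by
  have hderiv (n : ℕ) : ∀ x ∈ s,
      HasDerivAt (taylorRemainder F c (n + 1)) (taylorRemainder F c n x) x :=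
    fun x hx => hasDerivAt_taylorRemainder_succ (hF n x hx)
  have hcont : ∀ n, ContinuousOn (taylorRemainder F c n) s
    | 0 => taylorRemainder_zero (F := F) ▸ hF0
    | n + 1 => fun x hx => (hderiv n x hx).continuousAt.continuousWithinAt
  induction n with
  | zero => rwa [taylorRemainder_zero]
  | succ n ih =>
    intro x hx
    have hsub : Set.uIcc c x ⊆ s := hs.uIcc_subset hc hx
    calc G (n + 1) x
      _ = ∫ u in c..x, G n u := hG n x hx
      _ = ∫ u in c..x, taylorRemainder F c n u :=
        intervalIntegral.integral_congr (ih.mono hsub)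
      _ = taylorRemainder F c (n + 1) x - taylorRemainder F c (n + 1) c :=
        intervalIntegral.integral_eq_sub_of_hasDerivAt (fun u hu => hderiv n u (hsub hu))
          ((hcont n).mono hsub).intervalIntegrable
      _ = taylorRemainder F c (n + 1) x := by rw [taylorRemainder_succ_self, sub_zero]

end TaylorRemainder

section Primitives

open scoped Nat

/-- The `n`-fold primitive of `Real.log` of the form `y ^ n / n! * (log y + const)`. -/
noncomputable def logPrimitive (n : ℕ) (y : ℝ) : ℝ :=
  y ^ n / n ! * (Real.log y - harmonic n)

lemma logPrimitive_zero : logPrimitive 0 = Real.log := by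
  funext y
  simp [logPrimitive]

lemma logPrimitive_one_right (n : ℕ) : logPrimitive n 1 = -harmonic n / n ! := by
  simp [logPrimitive, div_eq_inv_mul]

lemma hasDerivAt_logPrimitive_succ (n : ℕ) {y : ℝ} (hy : y ≠ 0) :
    HasDerivAt (logPrimitive (n + 1)) (logPrimitive n y) y := by
  have hpow : HasDerivAt (fun z : ℝ => z ^ (n + 1) / (n + 1)!) (y ^ n / n !) y := by
    simpa using hasDerivAt_sub_pow_succ_div_factorial 0 y n
  refine (hpow.fun_mul ((Real.hasDerivAt_log hy).sub_const (harmonic (n + 1) : ℝ))).congr_deriv ?_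
  rw [logPrimitive, harmonic_succ, Nat.factorial_succ]
  push_cast
  field_simp
  ring

/-- The geometric series `1 / (1 - a * x)` at index `0` and its `n`-fold primitive at index `n`,
obtained from `logPrimitive (n - 1)` by the substitution `y = 1 - a * x`. -/
noncomputable def geomPrimitive (a : ℝ) : ℕ → ℝ → ℝ
  | 0, x => 1 / (1 - a * x)
  | n + 1, x => (-1) ^ (n + 1) / a ^ (n + 1) * logPrimitive n (1 - a * x)

lemma geomPrimitive_succ_apply_zero (a : ℝ) (n : ℕ) :
    geomPrimitive a (n + 1) 0 = -((-1) ^ (n + 1) * harmonic n / (a ^ (n + 1) * n !)) := by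
  rw [geomPrimitive, mul_zero, sub_zero, logPrimitive_one_right]
  ring

lemma hasDerivAt_geomPrimitive_succ {a : ℝ} (ha : a ≠ 0) (n : ℕ) {x : ℝ}
    (hx : 1 - a * x ≠ 0) :
    HasDerivAt (geomPrimitive a (n + 1)) (geomPrimitive a n x) x := by
  have hlin : HasDerivAt (fun x : ℝ => 1 - a * x) (-a) x := by
    simpa using ((hasDerivAt_id x).const_mul a).const_sub 1
  have hchain {f : ℝ → ℝ} {f' : ℝ} (hf : HasDerivAt f f' (1 - a * x)) :
      HasDerivAt (fun x => (-1) ^ (n + 1) / a ^ (n + 1) * f (1 - a * x))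
        ((-1) ^ n / a ^ n * f') x := by
    refine ((hf.comp x hlin).const_mul _).congr_deriv ?_
    field_simp
    ring
  cases n with
  | zero =>
    refine (hchain (logPrimitive_zero ▸ Real.hasDerivAt_log hx)).congr_deriv ?_
    simp [geomPrimitive]
  | succ n => exact hchain (hasDerivAt_logPrimitive_succ n hx)

lemma taylorRemainder_geomPrimitive_succ (a : ℝ) (n : ℕ) (x : ℝ) :
    taylorRemainder (geomPrimitive a) 0 (n + 1) x =
      (-1) ^ (n + 1) / (a ^ (n + 1) * n !) *
          ((1 - a * x) ^ n * Real.log (1 - a * x) - harmonic n * (1 - a * x) ^ n + harmonic n) +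
        ∑ k ∈ Finset.Icc 1 (n - 1),
          (-1) ^ (n + 1 - k) * harmonic (n - k) * x ^ k /
            (a ^ (n + 1 - k) * (n - k)! * k !) := by
  have hcoeff {k : ℕ} (hk : k ≤ n) : x ^ k / k ! * geomPrimitive a (n + 1 - k) 0 =
      -((-1) ^ (n + 1 - k) * harmonic (n - k) * x ^ k /
        (a ^ (n + 1 - k) * (n - k)! * k !)) := by
    rw [Nat.sub_add_comm hk, geomPrimitive_succ_apply_zero]
    ring
  have hlast : x ^ n / n ! * geomPrimitive a (n + 1 - n) 0 = 0 := by
    rw [hcoeff le_rfl, Nat.sub_self, harmonic_zero]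
    simp
  simp only [taylorRemainder, sub_zero, smul_eq_mul]
  rw [sum_range_succ_eq_add_sum_Icc_of_last_eq_zero hlast, hcoeff n.zero_le,
    Finset.sum_congr rfl fun k hk => hcoeff ((Finset.mem_Icc.1 hk).2.trans (n.sub_le 1)),
    Finset.sum_neg_distrib, geomPrimitive, logPrimitive]
  simp only [Nat.sub_zero, pow_zero, Nat.factorial_zero, Nat.cast_one]
  ring

end Primitives

theorem iterated_integral_geom_series_general (a : ℝ) (ha : a ≠ 0) (G : ℕ → ℝ → ℝ)
    (hG0 : ∀ x : ℝ, a * x < 1 → G 0 x = 1 / (1 - a * x))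
    (hGsucc : ∀ j : ℕ, ∀ x : ℝ, a * x < 1 → G (j + 1) x = ∫ u in (0 : ℝ)..x, G j u)
    (p : ℕ) (hp : 1 ≤ p) (x : ℝ) (hx : a * x < 1) :
    G p x =
      ((-1 : ℝ) ^ p / (a ^ p * (Nat.factorial (p - 1) : ℝ))) *
          ((1 - a * x) ^ (p - 1) * Real.log (1 - a * x) -
            (harmonic' (p - 1) : ℝ) * (1 - a * x) ^ (p - 1) + (harmonic' (p - 1) : ℝ)) +
        ∑ k ∈ Finset.Icc 1 (p - 2),
          (-1 : ℝ) ^ (p - k) * (harmonic' (p - 1 - k) : ℝ) * x ^ k /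
            (a ^ (p - k) * (Nat.factorial (p - 1 - k) : ℝ) * (Nat.factorial k : ℝ)) := by
  obtain ⟨n, rfl⟩ := Nat.exists_eq_add_of_le' hp
  have hs : {x : ℝ | a * x < 1}.OrdConnected :=
    ((convex_Iio (1 : ℝ)).linear_preimage (LinearMap.mulLeft ℝ a)).ordConnected
  have hne : ∀ y ∈ {x : ℝ | a * x < 1}, 1 - a * y ≠ 0 := fun y hy => (sub_pos.2 hy).ne'
  have hcont : ContinuousOn (geomPrimitive a 0) {x : ℝ | a * x < 1} :=
    continuousOn_const.div (by fun_prop) hne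
  have hG := eqOn_taylorRemainder_of_iterated_integral hs (c := 0) (by simp) hcont
    (fun n y hy => hasDerivAt_geomPrimitive_succ ha n (hne y hy)) hG0 hGsucc (n + 1) hx
  rw [hG, taylorRemainder_geomPrimitive_succ, harmonic'_eq_harmonic]
  rfl

theorem iterated_integral_geom_series (a : ℝ) (ha : 0 < a) (G : ℕ → ℝ → ℝ)
    (hG0 : ∀ x : ℝ, x < 1 / a → G 0 x = 1 / (1 - a * x))
    (hGsucc : ∀ j : ℕ, ∀ x : ℝ, x < 1 / a → G (j + 1) x = ∫ u in (0 : ℝ)..x, G j u)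
    (p : ℕ) (hp : 1 ≤ p) (x : ℝ) (hx : x < 1 / a) :
    G p x =
      ((-1 : ℝ) ^ p / (a ^ p * (Nat.factorial (p - 1) : ℝ))) *
          ((1 - a * x) ^ (p - 1) * Real.log (1 - a * x) -
            (harmonic' (p - 1) : ℝ) * (1 - a * x) ^ (p - 1) + (harmonic' (p - 1) : ℝ)) +
        ∑ k ∈ Finset.Icc 1 (p - 2),
          (-1 : ℝ) ^ (p - k) * (harmonic' (p - 1 - k) : ℝ) * x ^ k /
            (a ^ (p - k) * (Nat.factorial (p - 1 - k) : ℝ) * (Nat.factorial k : ℝ)) := by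
  simp only [lt_div_iff₀' ha] at hG0 hGsucc hx
  exact iterated_integral_geom_series_general a ha.ne' G hG0 hGsucc p hp x hx
end

section
/- For every integer n ≥ 3, Σ_{k=3}^{n} C(n,k) S(k,3) (B_{n+2−k} − B_{n+1−k}) = (2^{n−1}(n−3) + 2)/3. -/
/-- Stirling numbers of the second kind. -/
def stirling2 (n k : ℕ) : ℚ :=
  (1 / (Nat.factorial k : ℚ)) *
    ∑ j ∈ Finset.range (k + 1), (-1 : ℚ) ^ (k - j) * (Nat.choose k j : ℚ) * (j : ℚ) ^ n

/-!
Write `E = eᵗ` and let `F = t / (E - 1)` be the exponential generating function of the Bernoulli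
numbers. The Stirling numbers `S(k, 3)` have exponential generating function `(E - 1)³ / 3!`, while
`B_{j+2} - B_{j+1}` has `F'' - F'`, so the sum is `n!` times the `n`-th coefficient of
`(E - 1)³ (F'' - F') / 3!`. Differentiating `F (E - 1) = t` twice shows that the factor `(E - 1)³`
clears all denominators and leaves a polynomial in `t` and `E`, whose coefficients are explicit.
-/

section ExponentialGeneratingFunction

open PowerSeries Finset
open scoped Nat

variable {K : Type*} [Field K]

/-- The exponential generating function `∑ aₙ Xⁿ / n!` of a sequence `a`, through which binomial
convolutions become products of power series. -/
noncomputable def egf (a : ℕ → K) : K⟦X⟧ :=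
  .mk fun n ↦ a n / n !

@[simp]
theorem coeff_egf (a : ℕ → K) (n : ℕ) : coeff n (egf a) = a n / n ! :=
  coeff_mk ..

theorem egf_sub (a b : ℕ → K) : egf (fun n ↦ a n - b n) = egf a - egf b := by
  ext n
  simp [sub_div]

variable [CharZero K]

theorem derivative_egf (a : ℕ → K) : d⁄dX K (egf a) = egf fun n ↦ a (n + 1) := by
  ext n
  rw [coeff_derivative, coeff_egf, coeff_egf, Nat.factorial_succ, Nat.cast_mul, Nat.cast_succ]
  field_simp

theorem X_mul_egf (a : ℕ → K) : X * egf a = egf fun n ↦ n * a (n - 1) := by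
  ext (_ | n)
  · simp
  · rw [coeff_succ_X_mul, coeff_egf, coeff_egf, Nat.factorial_succ, Nat.add_sub_cancel]
    push_cast
    field_simp

theorem egf_mul (a b : ℕ → K) :
    egf a * egf b = egf fun n ↦ ∑ k ∈ range (n + 1), (n.choose k : K) * a k * b (n - k) := by
  ext n
  rw [coeff_mul, Nat.sum_antidiagonal_eq_sum_range_succ_mk, coeff_egf, sum_div]
  refine sum_congr rfl fun k hk ↦ ?_
  rw [coeff_egf, coeff_egf, Nat.cast_choose K (mem_range_succ_iff.mp hk)]
  have : (n ! : K) ≠ 0 := mod_cast n.factorial_ne_zero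
  field_simp

end ExponentialGeneratingFunction

section Stirling

open PowerSeries Finset
open scoped Nat

theorem exp_pow_eq_egf {K : Type*} [Field K] [Algebra ℚ K] (m : ℕ) :
    exp K ^ m = egf fun n ↦ (m : K) ^ n := by
  ext n
  simp [exp_pow_eq_rescale_exp, div_eq_mul_inv]

theorem factorial_smul_egf_stirling2 (m : ℕ) :
    (m ! : ℚ) • egf (fun n ↦ stirling2 n m) = (exp ℚ - 1) ^ m := by
  ext n
  have binomial : (exp ℚ - 1) ^ m =
      ∑ j ∈ range (m + 1), C ((-1) ^ (m - j) * (m.choose j : ℚ)) * exp ℚ ^ j := by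
    rw [sub_eq_add_neg, add_pow]
    refine sum_congr rfl fun j _ ↦ ?_
    simp only [map_mul, map_pow, map_neg, map_one, map_natCast]
    ring
  simp only [binomial, exp_pow_eq_egf, map_sum, coeff_C_mul, coeff_egf, coeff_smul, stirling2,
    smul_eq_mul, mul_div_assoc', ← sum_div]
  field_simp

theorem stirling2_eq_zero_of_lt {n m : ℕ} (h : n < m) : stirling2 n m = 0 := by
  have dvd : X ^ m ∣ (exp ℚ - 1) ^ m := pow_dvd_pow_of_dvd (X_dvd_iff.mpr (by simp)) m
  have coeff_eq_zero := X_pow_dvd_iff.mp dvd n h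
  rw [← factorial_smul_egf_stirling2] at coeff_eq_zero
  simpa [Nat.factorial_ne_zero] using coeff_eq_zero

theorem factorial_smul_egf_sum_choose_mul_stirling2_mul (m : ℕ) (a : ℕ → ℚ) :
    (m ! : ℚ) • egf (fun n ↦ ∑ k ∈ Icc m n, (n.choose k : ℚ) * stirling2 k m * a (n - k)) =
      (exp ℚ - 1) ^ m * egf a := by
  rw [← factorial_smul_egf_stirling2, smul_mul_assoc, egf_mul]
  congr 2 with n
  refine sum_subset (fun k hk ↦ ?_) fun k hk hk' ↦ ?_
  · exact mem_range_succ_iff.mpr (mem_Icc.mp hk).2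
  · have : k < m := by grind
    rw [stirling2_eq_zero_of_lt this, mul_zero, zero_mul]

end Stirling

section Bernoulli

open PowerSeries

theorem bernoulliPowerSeries_eq_egf : bernoulliPowerSeries ℚ = egf bernoulli := rfl

variable (A : Type*) [CommRing A] [Algebra ℚ A]

theorem derivative_bernoulliPowerSeries_mul_exp_sub_one :
    d⁄dX A (bernoulliPowerSeries A) * (exp A - 1) = 1 - bernoulliPowerSeries A * exp A := by
  have h := congrArg (d⁄dX A) (bernoulliPowerSeries_mul_exp_sub_one A)
  simp only [Derivation.leibniz, map_sub, derivative_exp, derivative_X, derivative_one,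
    smul_eq_mul] at h
  linear_combination h

theorem derivative_derivative_bernoulliPowerSeries_mul_exp_sub_one :
    d⁄dX A (d⁄dX A (bernoulliPowerSeries A)) * (exp A - 1) =
      -(2 * d⁄dX A (bernoulliPowerSeries A) + bernoulliPowerSeries A) * exp A := by
  have h := congrArg (d⁄dX A) (derivative_bernoulliPowerSeries_mul_exp_sub_one A)
  simp only [Derivation.leibniz, map_sub, derivative_exp, derivative_one, smul_eq_mul] at h
  linear_combination h

theorem exp_sub_one_sq_mul_derivative_bernoulliPowerSeries :
    (exp A - 1) ^ 2 * d⁄dX A (bernoulliPowerSeries A) = exp A - 1 - X * exp A := by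
  linear_combination (exp A - 1) * derivative_bernoulliPowerSeries_mul_exp_sub_one A -
    exp A * bernoulliPowerSeries_mul_exp_sub_one A

theorem exp_sub_one_pow_three_mul_derivative_derivative_bernoulliPowerSeries :
    (exp A - 1) ^ 3 * d⁄dX A (d⁄dX A (bernoulliPowerSeries A)) =
      X * exp A * (exp A + 1) - 2 * exp A * (exp A - 1) := by
  linear_combination
    (exp A - 1) ^ 2 * derivative_derivative_bernoulliPowerSeries_mul_exp_sub_one A -
      2 * exp A * exp_sub_one_sq_mul_derivative_bernoulliPowerSeries A -
      exp A * (exp A - 1) * bernoulliPowerSeries_mul_exp_sub_one A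

theorem exp_sub_one_pow_three_mul_egf_bernoulli_sub :
    (exp ℚ - 1) ^ 3 * egf (fun j ↦ bernoulli (j + 2) - bernoulli (j + 1)) =
      egf fun n ↦ (2 * (n * 2 ^ (n - 1)) - 3 * 2 ^ n + 4 - 0 ^ n : ℚ) := by
  calc
    _ = (exp ℚ - 1) ^ 3 * (d⁄dX ℚ (d⁄dX ℚ (bernoulliPowerSeries ℚ)) -
          d⁄dX ℚ (bernoulliPowerSeries ℚ)) := by
      rw [egf_sub, bernoulliPowerSeries_eq_egf, derivative_egf, derivative_egf]
    _ = C 2 * (X * exp ℚ ^ 2) - C 3 * exp ℚ ^ 2 + C 4 * exp ℚ ^ 1 - exp ℚ ^ 0 := by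
      simp only [map_ofNat]
      linear_combination
        exp_sub_one_pow_three_mul_derivative_derivative_bernoulliPowerSeries ℚ -
          (exp ℚ - 1) * exp_sub_one_sq_mul_derivative_bernoulliPowerSeries ℚ
    _ = _ := by
      ext n
      simp only [exp_pow_eq_egf, X_mul_egf, map_add, map_sub, coeff_C_mul, coeff_egf]
      push_cast
      ring

end Bernoulli

theorem sum_stirling2_bernoulli_three (n : ℕ) (h : 3 ≤ n) :
    ∑ k ∈ Finset.Icc 3 n,
        (Nat.choose n k : ℚ) * stirling2 k 3 * (bernoulli (n + 2 - k) - bernoulli (n + 1 - k)) =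
      (2 ^ (n - 1) * ((n : ℚ) - 3) + 2) / 3 := by
  have coeff_eq := congrArg (PowerSeries.coeff n)
    ((factorial_smul_egf_sum_choose_mul_stirling2_mul 3 _).trans
      exp_sub_one_pow_three_mul_egf_bernoulli_sub)
  have sum_eq : 6 * ∑ k ∈ Finset.Icc 3 n, (n.choose k : ℚ) * stirling2 k 3 *
      (bernoulli (n - k + 2) - bernoulli (n - k + 1)) =
        2 * (n * 2 ^ (n - 1)) - 3 * 2 ^ n + 4 := by
    have : n ≠ 0 := by lia
    simpa [Nat.factorial, mul_div_assoc', div_left_inj', Nat.factorial_ne_zero, this]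
      using coeff_eq
  have reindex : ∀ k ∈ Finset.Icc 3 n,
      (n.choose k : ℚ) * stirling2 k 3 * (bernoulli (n + 2 - k) - bernoulli (n + 1 - k)) =
        n.choose k * stirling2 k 3 * (bernoulli (n - k + 2) - bernoulli (n - k + 1)) := by
    intro k hk
    have := (Finset.mem_Icc.mp hk).2
    rw [Nat.sub_add_comm this, Nat.sub_add_comm this]
  rw [Finset.sum_congr rfl reindex]
  have two_pow : (2 : ℚ) ^ n = 2 * 2 ^ (n - 1) := (mul_pow_sub_one (by lia) 2).symm
  linear_combination sum_eq / 6 - two_pow / 2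
end

section
/- For all integers n ≥ 0 and p ≥ 0, the p-Bernoulli numbers satisfy the recurrence B_{n+1,p} = p·B_{n,p} − ((p+1)^2/(p+2))·B_{n,p+1}. -/
/-- The `p`-Bernoulli numbers. -/
def pBernoulli (n p : ℕ) : ℚ :=
  ∑ k ∈ Finset.range (n + 1),
    (-1 : ℚ) ^ k * stirling2 n k * ((Nat.choose (k + p + 1) k : ℚ))⁻¹ * (Nat.factorial k : ℚ)

/-!
The explicit formula says that `k! S(n,k)` is the `k`-th forward difference of `x ^ n` at `0`, and
the Leibniz rule for `x * x ^ n` becomes the recurrence `S(n+1,k) = k S(n,k) + S(n,k-1)`. Summed by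
parts, this turns `∑ (-1)^k k! S(n+1,k) w(k)` into `∑ (-1)^k k! S(n,k) (k w(k) - (k+1) w(k+1))`.
For the weight `w_p(k) = 1 / C(k+p+1,k)`, both `w_p(k+1)` and `w_{p+1}(k)` are multiples of `w_p(k)`
by fractions with denominator `k+p+2`, and `k (k+p+2) - (k+1)^2 = p (k+p+2) - (p+1)^2` rewrites
`k w_p(k) - (k+1) w_p(k+1)` as `p w_p(k) - (p+1)^2/(p+2) w_{p+1}(k)`.
-/

open Finset Nat

section ForwardDifference

variable {R : Type*} [CommRing R]

theorem fwdDiff_iter_succ_id_mul (h : R) (f : R → R) (k : ℕ) (y : R) :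
    (fwdDiff h)^[k + 1] (fun x ↦ x * f x) y =
      (y + (k + 1) * h) * (fwdDiff h)^[k + 1] f y + (k + 1) * h * (fwdDiff h)^[k] f y := by
  induction k generalizing y with
  | zero =>
    simp only [zero_add, Function.iterate_one, Function.iterate_zero, id_eq, fwdDiff]
    push_cast
    ring
  | succ k ih =>
    have iter_shift (m : ℕ) :
        (fwdDiff h)^[m] f (y + h) = (fwdDiff h)^[m + 1] f y + (fwdDiff h)^[m] f y := by
      rw [Function.iterate_succ_apply', fwdDiff, sub_add_cancel]
    rw [Function.iterate_succ_apply', fwdDiff, ih, ih, iter_shift, iter_shift]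
    push_cast
    ring

theorem fwdDiff_iter_pow_zero (n k : ℕ) :
    (fwdDiff 1)^[k] (fun x : R ↦ x ^ n) 0 = k ! * stirlingSecond n k := by
  induction n generalizing k with
  | zero =>
    cases k with
    | zero => simp
    | succ k =>
      rw [fwdDiff_iter_pow_eq_zero_of_lt k.succ_pos]
      simp
  | succ n ih =>
    cases k with
    | zero => simp
    | succ k =>
      simp only [_root_.pow_succ']
      rw [fwdDiff_iter_succ_id_mul, ih, ih, stirlingSecond_succ_succ, factorial_succ]
      push_cast
      ring

end ForwardDifference

theorem stirling2_eq_stirlingSecond (n k : ℕ) : stirling2 n k = stirlingSecond n k := by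
  have alternating_sum : ∑ j ∈ range (k + 1), (-1 : ℚ) ^ (k - j) * (k.choose j : ℚ) * (j : ℚ) ^ n =
      k ! * stirlingSecond n k := by
    rw [← fwdDiff_iter_pow_zero, fwdDiff_iter_eq_sum_shift]
    simp
  rw [stirling2, alternating_sum, one_div, inv_mul_cancel_left₀ (by positivity)]

theorem sum_stirlingSecond_succ_mul {R : Type*} [CommRing R] (n : ℕ) (w : ℕ → R) :
    ∑ k ∈ range (n + 2), (-1) ^ k * (k ! * stirlingSecond (n + 1) k) * w k =
      ∑ k ∈ range (n + 1),
        (-1) ^ k * (k ! * stirlingSecond n k) * (k * w k - (k + 1) * w (k + 1)) := by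
  let a (k : ℕ) : R := (-1) ^ k * (k ! * stirlingSecond n k)
  have shift : ∑ k ∈ range (n + 1), a (k + 1) * ((k + 1) * w (k + 1)) =
      ∑ k ∈ range (n + 1), a k * (k * w k) := by
    have := sum_range_succ' (fun k ↦ a k * (k * w k)) (n + 1)
    rw [sum_range_succ] at this
    simpa [a, stirlingSecond_eq_zero_of_lt n.lt_succ_self] using this.symm
  calc ∑ k ∈ range (n + 2), (-1) ^ k * (k ! * stirlingSecond (n + 1) k) * w k
      = ∑ k ∈ range (n + 1), (a (k + 1) * ((k + 1) * w (k + 1)) - a k * ((k + 1) * w (k + 1))) := by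
        rw [sum_range_succ']
        simp only [stirlingSecond_succ_zero, cast_zero, mul_zero, zero_mul, add_zero]
        refine sum_congr rfl fun k _ ↦ ?_
        simp only [a, stirlingSecond_succ_succ, factorial_succ]
        push_cast
        ring
    _ = ∑ k ∈ range (n + 1), a k * (k * w k - (k + 1) * w (k + 1)) := by
        simp only [mul_sub, sum_sub_distrib, shift]

section InverseBinomial

variable {K : Type*} [Field K] [CharZero K]

theorem inv_choose_succ_succ (n k : ℕ) :
    ((n + 1).choose (k + 1) : K)⁻¹ = (k + 1) / (n + 1) * (n.choose k : K)⁻¹ := by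
  have absorption : ((n : K) + 1) * n.choose k = (n + 1).choose (k + 1) * (k + 1) :=
    mod_cast add_one_mul_choose_eq n k
  have hk : (k : K) + 1 ≠ 0 := cast_add_one_ne_zero k
  rw [eq_div_of_mul_eq hk absorption.symm, inv_div, div_mul_eq_div_div, div_eq_mul_inv _ (_ : K)]

theorem inv_choose_succ_left {n k : ℕ} (hk : k ≤ n) :
    ((n + 1).choose k : K)⁻¹ = (n + 1 - k) / (n + 1) * (n.choose k : K)⁻¹ := by
  have absorption : (n.choose k : K) * (n + 1) = (n + 1).choose k * (n + 1 - k) := by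
    have := congrArg (Nat.cast (R := K)) (choose_mul_succ_eq n k)
    push_cast [Nat.cast_sub (hk.trans n.le_succ)] at this
    exact this
  have hn : (n : K) + 1 ≠ 0 := cast_add_one_ne_zero n
  have h₀ : (n.choose k : K) ≠ 0 := cast_ne_zero.2 (choose_pos hk).ne'
  have h₁ : ((n + 1).choose k : K) ≠ 0 := cast_ne_zero.2 (choose_pos (hk.trans n.le_succ)).ne'
  field_simp
  linear_combination absorption

theorem mul_inv_choose_sub_succ_mul_inv_choose (k p : ℕ) :
    k * ((k + p + 1).choose k : K)⁻¹ - (k + 1) * ((k + 1 + p + 1).choose (k + 1) : K)⁻¹ =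
      p * ((k + p + 1).choose k : K)⁻¹ -
        (p + 1) ^ 2 / (p + 2) * ((k + (p + 1) + 1).choose k : K)⁻¹ := by
  have hp : (p : K) + 2 ≠ 0 := mod_cast (p + 1).succ_ne_zero
  have hkp : (k : K) + p + 1 + 1 ≠ 0 := mod_cast (k + p + 1).succ_ne_zero
  rw [show k + 1 + p + 1 = k + p + 1 + 1 by ring, show k + (p + 1) + 1 = k + p + 1 + 1 by ring,
    inv_choose_succ_succ, inv_choose_succ_left (by lia : k ≤ k + p + 1)]
  generalize ((k + p + 1).choose k : K)⁻¹ = w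
  push_cast
  field_simp
  ring

end InverseBinomial

theorem pBernoulli_eq_sum_stirlingSecond (n p : ℕ) :
    pBernoulli n p = ∑ k ∈ range (n + 1),
      (-1) ^ k * (k ! * stirlingSecond n k) * ((k + p + 1).choose k : ℚ)⁻¹ := by
  refine sum_congr rfl fun k _ ↦ ?_
  rw [stirling2_eq_stirlingSecond]
  ring

theorem pBernoulli_recurrence (n p : ℕ) :
    pBernoulli (n + 1) p =
      (p : ℚ) * pBernoulli n p - (((p : ℚ) + 1) ^ 2 / ((p : ℚ) + 2)) * pBernoulli n (p + 1) := by
  simp only [pBernoulli_eq_sum_stirlingSecond]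
  rw [sum_stirlingSecond_succ_mul n fun k ↦ ((k + p + 1).choose k : ℚ)⁻¹,
    mul_sum, mul_sum, ← sum_sub_distrib]
  refine sum_congr rfl fun k _ ↦ ?_
  rw [mul_inv_choose_sub_succ_mul_inv_choose]
  ring
end
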